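/- Let Γ ⊂ ℂ be a quasismooth Jordan curve, and assume c₁ > 0 is a constant such that every generalized polynomial q_r of degree r with |{z ∈ Γ : q_r(z) > 1}| ≤ s < (diam Γ)/2 satisfies ‖q_r‖_{C(Γ)} ≤ exp(c₁ δ(s) r). Then there exists a constant c₂ > 0 depending only on Γ and c₁ such that for every 1 ≤ p < ∞, every generalized polynomial q_r of degree r, every 0 < s < (diam Γ)/4, and every Borel set A ⊂ Γ with |A| ≥ |Γ| − s, one has ∫_Γ (q_r)^p ds ≤ (1 + exp(c₂ δ(s) p r)) ∫_A (q_r)^p ds. -/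

import Mathlib

open MeasureTheory Metric Set Filter Bornology Complex
open scoped ENNReal NNReal Topology

noncomputable section

/-- `Γ` is a Jordan curve: the image of an injective continuous map of the unit circle. -/
def IsJordanCurve (Γ : Set ℂ) : Prop :=
  ∃ γ : ℂ → ℂ, ContinuousOn γ (Metric.sphere (0:ℂ) 1) ∧
    Set.InjOn γ (Metric.sphere (0:ℂ) 1) ∧ Γ = γ '' (Metric.sphere (0:ℂ) 1)

/-- A (closed) subarc of `Γ`: a closed connected subset. -/
def IsSubarc (Γ J : Set ℂ) : Prop :=
  J ⊆ Γ ∧ IsClosed J ∧ IsPreconnected J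

/-- `|Γ(z₁,z₂)|`: the length (1-dimensional Hausdorff measure) of the shorter subarc of `Γ`
joining `z₁` and `z₂`, described as the infimum of lengths of closed connected subsets of `Γ`
containing both points. -/
def shorterArcLength (Γ : Set ℂ) (z₁ z₂ : ℂ) : ℝ≥0∞ :=
  ⨅ (J : Set ℂ) (_ : IsSubarc Γ J ∧ z₁ ∈ J ∧ z₂ ∈ J), μH[1] J

/-- `J` is (a realization of) the shorter arc `Γ(z₁,z₂)` of `Γ` between `z₁` and `z₂`. -/
def IsShorterArc (Γ : Set ℂ) (z₁ z₂ : ℂ) (J : Set ℂ) : Prop :=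
  IsSubarc Γ J ∧ z₁ ∈ J ∧ z₂ ∈ J ∧ μH[1] J = shorterArcLength Γ z₁ z₂

/-- `Γ` is quasismooth (in the sense of Lavrentiev) with constant `Λ ≥ 1`:
`|Γ(z₁,z₂)| ≤ Λ |z₁ - z₂|`. -/
def IsQuasismooth (Γ : Set ℂ) (Λ : ℝ) : Prop :=
  1 ≤ Λ ∧ ∀ z₁ ∈ Γ, ∀ z₂ ∈ Γ,
    shorterArcLength Γ z₁ z₂ ≤ ENNReal.ofReal (Λ * dist z₁ z₂)

/-- The union of the unbounded connected components of `Γᶜ`; for a Jordan curve `Γ` this is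
the (unique) unbounded component `Ω` of the complement of `Γ`. -/
def unboundedComponent (Γ : Set ℂ) : Set ℂ :=
  {z | z ∉ Γ ∧ ¬ Bornology.IsBounded (connectedComponentIn Γᶜ z)}

/-- `d(A,B) := inf {|z-ζ| : z ∈ A, ζ ∈ B}`. -/
def setDist (A B : Set ℂ) : ℝ := sInf (Set.image2 dist A B)

/-- The exterior `𝔻*` of the closed unit disk (finite part). -/
def extDisk : Set ℂ := {w : ℂ | 1 < ‖w‖}

/-- `Φ` is the conformal (holomorphic bijective) map of `Ω` onto `𝔻* = {|w| > 1}` normalized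
by `Φ(∞) = ∞` and `Φ'(∞) := lim_{z→∞} Φ(z)/z > 0`. -/
def IsExtConformal (Ω : Set ℂ) (Φ : ℂ → ℂ) : Prop :=
  DifferentiableOn ℂ Φ Ω ∧ Set.BijOn Φ Ω extDisk ∧
    ∃ c : ℝ, 0 < c ∧
      Filter.Tendsto (fun z => Φ z / z) (Bornology.cobounded ℂ) (nhds (c : ℂ))

/-- `Φ` additionally extends to a homeomorphism of `closure Ω` onto `{|w| ≥ 1}`. -/
def IsExtConformalClosure (Ω : Set ℂ) (Φ : ℂ → ℂ) : Prop :=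
  IsExtConformal Ω Φ ∧ ContinuousOn Φ (closure Ω) ∧
    Set.BijOn Φ (closure Ω) {w : ℂ | 1 ≤ ‖w‖}

/-- The level curve `Γ_δ := {ζ ∈ Ω : |Φ(ζ)| = 1 + δ}`. -/
def levelCurve (Ω : Set ℂ) (Φ : ℂ → ℂ) (δ : ℝ) : Set ℂ :=
  {ζ ∈ Ω | ‖Φ ζ‖ = 1 + δ}

/-- `ρ_δ(z) := d({z}, Γ_δ)`. -/
def rho (Ω : Set ℂ) (Φ : ℂ → ℂ) (δ : ℝ) (z : ℂ) : ℝ :=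
  Metric.infDist z (levelCurve Ω Φ δ)

/-- `ν ∈ A∞(Γ)` with constant `lam ≥ 1`: `ν(J) ≤ lam · ν(S)` for every subarc `J ⊂ Γ` and
every Borel set `S ⊂ J` with `|J| ≤ 2|S|`. -/
def IsAInftyMeasure (Γ : Set ℂ) (ν : MeasureTheory.Measure ℂ) (lam : ℝ) : Prop :=
  1 ≤ lam ∧ ∀ J S : Set ℂ, IsSubarc Γ J → S ⊆ J → MeasurableSet S →
    μH[1] J ≤ 2 * μH[1] S → ν J ≤ ENNReal.ofReal lam * ν S

/-- `q` is a generalized polynomial of degree `r = β₁ + ⋯ + β_m`: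
`q(z) = c ∏_{j=1}^m |z - z_j|^{β_j}` with `c > 0` and `β_j > 0`. -/
def IsGenPoly (q : ℂ → ℝ) (r : ℝ) : Prop :=
  ∃ (m : ℕ) (zs : Fin m → ℂ) (β : Fin m → ℝ) (c : ℝ),
    0 < c ∧ (∀ j, 0 < β j) ∧ r = ∑ j, β j ∧
    ∀ z : ℂ, q z = c * ∏ j, ‖z - zs j‖ ^ (β j)

lemma exists_log_norm_eq_re {f : ℂ → ℂ} {c : ℂ} {R : ℝ} (hf : DifferentiableOn ℂ f (ball c R))
    (hR : 0 < R) (h0 : ∀ z ∈ ball c R, f z ≠ 0) :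
    ∃ g : ℂ → ℂ, DifferentiableOn ℂ g (ball c R) ∧ (g c).im = 0 ∧
      ∀ z ∈ ball c R, (g z).re = Real.log ‖f z‖ := by
  have hd : DifferentiableOn ℂ (fun z => deriv f z / f z) (ball c R) :=
    (hf.deriv isOpen_ball).div hf h0
  obtain ⟨h, hh⟩ := hd.isExactOn_ball
  have hc : c ∈ ball c R := mem_ball_self hR
  have hconst : ∀ z ∈ ball c R, f z * Complex.exp (-h z) = f c * Complex.exp (-h c) := by
    intro z hz
    have hder : ∀ w ∈ ball c R, HasDerivAt (fun z => f z * Complex.exp (-h z)) 0 w := by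
      intro w hw
      have h1 := (hf.differentiableAt (isOpen_ball.mem_nhds hw)).hasDerivAt
      have h2 := (hh w hw).neg.cexp
      refine (h1.mul h2).congr_deriv ?_
      have := h0 w hw
      simp only [Pi.neg_apply]
      field_simp
      ring
    exact isOpen_ball.is_const_of_deriv_eq_zero (convex_ball c R).isPreconnected
      (fun w hw => (hder w hw).differentiableAt.differentiableWithinAt)
      (fun w hw => (hder w hw).deriv) hz hc
  refine ⟨fun z => (Real.log ‖f c‖ : ℝ) + (h z - h c), ?_, by simp, ?_⟩
  · intro z hz
    exact ((hh z hz).differentiableAt.sub_const _).const_add _ |>.differentiableWithinAt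
  · intro z hz
    have e := congrArg (fun w => Real.log ‖w‖) (hconst z hz)
    simp only [norm_mul, Complex.norm_exp] at e
    rw [Real.log_mul (norm_ne_zero_iff.2 (h0 z hz)) (Real.exp_ne_zero _),
      Real.log_mul (norm_ne_zero_iff.2 (h0 c hc)) (Real.exp_ne_zero _), Real.log_exp,
      Real.log_exp] at e
    simp only [neg_re] at e
    simp only [add_re, sub_re, ofReal_re]
    linarith

/-- Harnack's inequality for `log ‖f‖`, where `f` is holomorphic and `1 < ‖f‖` on a disk. -/
lemma log_norm_harnack {f : ℂ → ℂ} {c w : ℂ} {R : ℝ} (hf : DifferentiableOn ℂ f (ball c R))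
    (h1 : ∀ z ∈ ball c R, 1 < ‖f z‖) (hw : w ∈ ball c R) :
    (R - dist w c) * Real.log ‖f c‖ ≤ (R + dist w c) * Real.log ‖f w‖ := by
  have hR : 0 < R := nonempty_ball.mp ⟨w, hw⟩
  have hc : c ∈ ball c R := mem_ball_self hR
  obtain ⟨g, hg, hgim, hgre⟩ := exists_log_norm_eq_re hf hR
    (fun z hz => norm_pos_iff.1 (one_pos.trans (h1 z hz)))
  have hpos : ∀ z ∈ ball c R, 0 < (g z).re := fun z hz => by
    rw [hgre z hz]; exact Real.log_pos (h1 z hz)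
  have hMc : g c = ((g c).re : ℂ) := Complex.ext (by simp) (by simpa using hgim)
  set M := (g c).re with hM
  have hMpos : 0 < M := hpos c hc
  have hne : ∀ z ∈ ball c R, (M : ℂ) + g z ≠ 0 := fun z hz h => by
    have := congrArg Complex.re h
    simp only [add_re, ofReal_re, zero_re] at this
    linarith [hpos z hz]
  set φ : ℂ → ℂ := fun z => ((M : ℂ) - g z) / (M + g z) with hφ
  have hφc : φ c = 0 := by simp only [hφ]; rw [hMc]; simp
  have hφd : DifferentiableOn ℂ φ (ball c R) := (hg.const_sub _).div (hg.const_add _) hne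
  have hmaps : MapsTo φ (ball c R) (closedBall (φ c) 1) := by
    intro z hz
    rw [hφc, mem_closedBall_zero_iff, norm_div]
    refine div_le_one_of_le₀ ?_ (norm_nonneg _)
    rw [← sq_le_sq₀ (norm_nonneg _) (norm_nonneg _), Complex.sq_norm, Complex.sq_norm,
      normSq_apply, normSq_apply]
    simp only [sub_re, sub_im, add_re, add_im, ofReal_re, ofReal_im]
    nlinarith [mul_pos hMpos (hpos z hz)]
  have hs := dist_le_div_mul_dist_of_mapsTo_ball hφd hmaps hw
  rw [hφc, dist_zero_right, norm_div, div_le_iff₀ (norm_pos_iff.2 (hne w hw))] at hs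
  have ht : dist w c < R := hw
  set t := dist w c
  have ht0 : 0 ≤ t := dist_nonneg
  have hs2 : R * ‖(M : ℂ) - g w‖ ≤ t * ‖(M : ℂ) + g w‖ := by
    calc R * ‖(M : ℂ) - g w‖ ≤ R * (1 / R * t * ‖(M : ℂ) + g w‖) := by gcongr
      _ = _ := by field_simp
  have hs3 := pow_le_pow_left₀ (by positivity) hs2 2
  rw [mul_pow, mul_pow, Complex.sq_norm, Complex.sq_norm, normSq_apply, normSq_apply] at hs3
  simp only [sub_re, sub_im, add_re, add_im, ofReal_re, ofReal_im] at hs3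
  rw [← hgre c hc, ← hgre w hw, ← hM]
  have hu := hpos w hw
  set u := (g w).re
  set v := (g w).im
  have htR : t ^ 2 ≤ R ^ 2 := by gcongr
  have h4 : (R * (M - u)) ^ 2 ≤ (t * (M + u)) ^ 2 := by
    nlinarith [mul_nonneg (sub_nonneg.2 htR) (mul_self_nonneg v)]
  have h5 : R * (M - u) ≤ t * (M + u) := (le_abs_self _).trans (abs_le_of_sq_le_sq h4 (by positivity))
  nlinarith

lemma hausdorffMeasure_one_pos_of_isPreconnected {K : Set ℂ} (hK : IsPreconnected K) {x y : ℂ}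
    (hx : x ∈ K) (hy : y ∈ K) (hxy : x ≠ y) : 0 < μH[1] K := by
  have h1 := (LipschitzWith.dist_right x).hausdorffMeasure_image_le (d := 1) zero_le_one K
  have h2 : Icc (dist x x) (dist x y) ⊆ (fun z => dist x z) '' K :=
    (hK.image _ (by fun_prop)).Icc_subset (mem_image_of_mem _ hx) (mem_image_of_mem _ hy)
  have h3 : 0 < (μH[1] : Measure ℝ) ((fun z => dist x z) '' K) := by
    refine lt_of_lt_of_le ?_ (measure_mono h2)
    rw [hausdorffMeasure_real, Real.volume_Icc]
    simpa using hxy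
  refine lt_of_lt_of_le h3 (h1.trans ?_)
  simp

/-- A connected subset of a Jordan curve containing two of its points contains one of the two
open arcs between them. -/
lemma image_Ioo_subset_or_of_isPreconnected {g : ℝ → ℂ} {T : ℝ} (hg : Continuous g)
    (hper : Function.Periodic g T) (hinj : ∀ a, InjOn g (Ico a (a + T)))
    {J : Set ℂ} (hJ : IsPreconnected J) (hJg : J ⊆ range g) {a b : ℝ} (hab : a < b)
    (hba : b < a + T) (ha : g a ∈ J) (hb : g b ∈ J) :
    g '' Ioo a b ⊆ J ∨ g '' Ioo b (a + T) ⊆ J := by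
  by_contra! h
  obtain ⟨h1, h2⟩ := h
  obtain ⟨_, ⟨p', hp', rfl⟩, hp'J⟩ := not_subset.1 h1
  obtain ⟨_, ⟨p, hp, rfl⟩, hpJ⟩ := not_subset.1 h2
  have hT : 0 < T := by linarith
  have hclosed : ∀ u v : ℝ, IsClosed (g '' Icc u v) := fun u v =>
    (isCompact_Icc.image hg).isClosed
  have hcover : J ⊆ g '' Icc p' p ∪ g '' Icc p (p' + T) := by
    intro z hz
    obtain ⟨t, rfl⟩ := hJg hz
    obtain ⟨t', ht', e⟩ := hper.exists_mem_Ico hT t p'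
    rw [e]
    rcases le_total t' p with h | h
    · exact Or.inl ⟨t', ⟨ht'.1, h⟩, rfl⟩
    · exact Or.inr ⟨t', ⟨h, ht'.2.le⟩, rfl⟩
  obtain ⟨z, hzJ, ⟨x, hx, hxz⟩, ⟨y, hy, hyz⟩⟩ :=
    isPreconnected_closed_iff.1 hJ _ _ (hclosed p' p) (hclosed p (p' + T)) hcover
    ⟨g b, hb, b, ⟨hp'.2.le, hp.1.le⟩, rfl⟩
    ⟨g a, ha, a + T, ⟨hp.2.le, by linarith [hp'.1]⟩, hper a⟩
  rcases hy.2.eq_or_lt with h | h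
  · exact hp'J (by rw [← hper p', ← h, hyz]; exact hzJ)
  · have hxy : x = y := hinj p' ⟨hx.1, by linarith [hx.2, hp.2, hp'.1, hy.1]⟩
      ⟨by linarith [hp'.2, hp.1, hy.1], h⟩ (hxz.trans hyz.symm)
    have : x = p := le_antisymm hx.2 (hxy ▸ hy.1)
    exact hpJ (by rw [← this, hxz]; exact hzJ)

lemma IsJordanCurve.exists_periodic {Γ : Set ℂ} (h : IsJordanCurve Γ) :
    ∃ g : ℝ → ℂ, Continuous g ∧ Function.Periodic g (2 * Real.pi) ∧
      (∀ a, InjOn g (Ico a (a + 2 * Real.pi))) ∧ Γ = range g := by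
  obtain ⟨γ, hc, hinj, rfl⟩ := h
  have hmem : ∀ t : ℝ, circleMap 0 1 t ∈ sphere (0 : ℂ) 1 := fun t =>
    circleMap_mem_sphere 0 zero_le_one t
  refine ⟨fun t => γ (circleMap 0 1 t), ?_, ?_, ?_, ?_⟩
  · exact hc.comp_continuous (continuous_circleMap 0 1) hmem
  · exact fun t => congrArg γ (periodic_circleMap 0 1 t)
  · intro a x hx y hy hxy
    have e := hinj (hmem x) (hmem y) hxy
    exact injOn_circleMap_of_abs_sub_le' one_ne_zero (by linarith) hx hy e
  · have : sphere (0 : ℂ) 1 = range (circleMap 0 1) := by simp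
    rw [this, ← range_comp]; rfl

lemma IsQuasismooth.hausdorffMeasure_lt_top {Γ : Set ℂ} {Λ : ℝ} (hJ : IsJordanCurve Γ)
    (hq : IsQuasismooth Γ Λ) : μH[1] Γ < ⊤ := by
  obtain ⟨g, hg, hper, hinj, rfl⟩ := hJ.exists_periodic
  have hπ := Real.pi_gt_three
  have hlocal : ∀ t₀ : ℝ, ∃ U ∈ 𝓝 t₀, μH[1] (g '' U) < ⊤ := by
    intro t₀
    have hK : 0 < μH[1] (g '' Icc (t₀ + 1) (t₀ + 2)) := by
      refine hausdorffMeasure_one_pos_of_isPreconnected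
        (isPreconnected_Icc.image g hg.continuousOn)
        (mem_image_of_mem g (left_mem_Icc.2 (by linarith)))
        (mem_image_of_mem g (right_mem_Icc.2 (by linarith))) fun h => ?_
      have := hinj (t₀ + 1) ⟨le_rfl, by linarith⟩ ⟨by linarith, by linarith⟩ h
      linarith
    have hlim : Tendsto (fun η : ℝ => ENNReal.ofReal (Λ * dist (g (t₀ - η)) (g (t₀ + η))))
        (𝓝[>] 0) (𝓝 0) := by
      have : Continuous fun η : ℝ =>
          ENNReal.ofReal (Λ * dist (g (t₀ - η)) (g (t₀ + η))) :=
        ENNReal.continuous_ofReal.comp (by fun_prop)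
      have h0 := this.tendsto 0
      simp only [sub_zero, add_zero, dist_self, mul_zero, ENNReal.ofReal_zero] at h0
      exact h0.mono_left nhdsWithin_le_nhds
    obtain ⟨η, hη, hη0, hη1⟩ := ((hlim.eventually_lt_const hK).and
      (Ioo_mem_nhdsGT (zero_lt_one : (0 : ℝ) < 1))).exists
    have hlt := (hq.2 (g (t₀ - η)) (mem_range_self _) (g (t₀ + η)) (mem_range_self _)).trans_lt hη
    unfold shorterArcLength at hlt
    simp only [iInf_lt_iff] at hlt
    obtain ⟨J, ⟨⟨hJΓ, -, hJc⟩, ha, hb⟩, hJm⟩ := hlt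
    rcases image_Ioo_subset_or_of_isPreconnected hg hper hinj hJc hJΓ
      (by linarith : t₀ - η < t₀ + η) (by linarith) ha hb with h | h
    · exact ⟨Ioo (t₀ - η) (t₀ + η), Ioo_mem_nhds (by linarith) (by linarith),
        (measure_mono h).trans_lt (hJm.trans_le le_top)⟩
    · refine absurd ((measure_mono (image_mono ?_)).trans (measure_mono h)) hJm.not_ge
      exact fun x hx => ⟨by linarith [hx.1], by linarith [hx.2]⟩
  have hrange : range g = g '' Icc 0 (0 + 2 * Real.pi) :=
    (hper.image_Icc (by positivity) 0).symm
  rw [hrange]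
  refine isCompact_Icc.induction_on (p := fun S => μH[1] (g '' S) < ⊤) (by simp)
    (fun s t hst ht => (measure_mono (image_mono hst)).trans_lt ht)
    (fun s t hs ht => ?_) (fun x _ => ?_)
  · rw [image_union]
    exact (measure_union_le _ _).trans_lt (ENNReal.add_lt_top.2 ⟨hs, ht⟩)
  · obtain ⟨U, hU, h⟩ := hlocal x
    exact ⟨U, mem_nhdsWithin_of_mem_nhds hU, h⟩

lemma nhds_le_map_nhds_of_injOn {Ω : Set ℂ} {f : ℂ → ℂ} {z₀ : ℂ} (hΩ : IsOpen Ω)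
    (hf : DifferentiableOn ℂ f Ω) (hinj : InjOn f Ω) (hz : z₀ ∈ Ω) :
    𝓝 (f z₀) ≤ map f (𝓝 z₀) := by
  refine (hf.analyticAt (hΩ.mem_nhds hz)).eventually_constant_or_nhds_le_map_nhds.resolve_left
    fun h => ?_
  have h2 : ∀ᶠ z in 𝓝[≠] z₀, z ∈ Ω ∧ f z = f z₀ :=
    ((hΩ.eventually_mem hz).and h).filter_mono nhdsWithin_le_nhds
  obtain ⟨z, ⟨hzΩ, hzf⟩, hne⟩ := (h2.and self_mem_nhdsWithin).exists
  exact hne (hinj hzΩ hz hzf)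

/-- A function with a simple pole at infinity maps neighbourhoods of infinity to
neighbourhoods of infinity. -/
lemma cobounded_le_map_of_tendsto_div {f : ℂ → ℂ} {c : ℂ} (hc : c ≠ 0)
    (hf : ∀ᶠ z in cobounded ℂ, DifferentiableAt ℂ f z)
    (hlim : Tendsto (fun z => f z / z) (cobounded ℂ) (𝓝 c)) :
    cobounded ℂ ≤ map f (cobounded ℂ) := by
  set k : ℂ → ℂ := fun ζ => ζ⁻¹ / f ζ⁻¹ with hk
  set k' : ℂ → ℂ := Function.update k 0 c⁻¹ with hk'
  set F : ℂ → ℂ := fun ζ => ζ * k' ζ with hF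
  have hinv : Tendsto (fun ζ : ℂ => ζ⁻¹) (𝓝[≠] 0) (cobounded ℂ) := tendsto_inv₀_nhdsNE_zero
  have hklim : Tendsto k (𝓝[≠] 0) (𝓝 c⁻¹) := by
    refine ((hlim.comp hinv).inv₀ hc).congr fun ζ => ?_
    simp [hk, div_eq_mul_inv]
  have hk'c : ContinuousAt k' 0 := continuousAt_update_same.2 hklim
  have hFeq : ∀ ζ : ℂ, ζ ≠ 0 → F ζ = (f ζ⁻¹)⁻¹ := by
    intro ζ h
    simp only [hF, hk', Function.update_of_ne h, hk]
    field_simp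
  have hfne : ∀ᶠ z in cobounded ℂ, f z ≠ 0 := by
    filter_upwards [hlim.eventually_ne hc] with z hz h
    simp [h] at hz
  have hFd : ∀ᶠ ζ in 𝓝[≠] (0 : ℂ), DifferentiableAt ℂ F ζ := by
    filter_upwards [hinv.eventually hf, hinv.eventually hfne, self_mem_nhdsWithin] with ζ h1 h2 h3
    have : DifferentiableAt ℂ (fun ζ => (f ζ⁻¹)⁻¹) ζ :=
      (h1.comp ζ (differentiableAt_inv h3)).inv h2
    refine this.congr_of_eventuallyEq ?_
    filter_upwards [isOpen_ne.mem_nhds h3] with w hw using hFeq w hw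
  have hFan : AnalyticAt ℂ F 0 :=
    analyticAt_of_differentiable_on_punctured_nhds_of_continuousAt hFd
      (continuousAt_id.mul hk'c)
  have hF0 : F 0 = 0 := by simp [hF]
  have hopen : 𝓝 (F 0) ≤ map F (𝓝 0) := by
    refine hFan.eventually_constant_or_nhds_le_map_nhds.resolve_left fun h => ?_
    have h2 : ∀ᶠ ζ in 𝓝[≠] (0 : ℂ), F ζ = F 0 := h.filter_mono nhdsWithin_le_nhds
    obtain ⟨ζ, h3, h4, h5⟩ := (h2.and ((hinv.eventually hfne).and self_mem_nhdsWithin)).exists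
    rw [hFeq ζ h5, hF0, inv_eq_zero] at h3
    exact h4 h3
  rw [hF0] at hopen
  intro S hS
  have hS' : ∀ᶠ ζ in 𝓝 (0 : ℂ), ζ ≠ 0 → f ζ⁻¹ ∈ S :=
    eventually_nhdsWithin_iff.1 (hinv.eventually hS)
  have himg : F '' {ζ | ζ ≠ 0 → f ζ⁻¹ ∈ S} ∈ 𝓝 (0 : ℂ) := hopen (image_mem_map hS')
  have hinv2 : Tendsto (fun w : ℂ => w⁻¹) (cobounded ℂ) (𝓝 0) := tendsto_inv₀_cobounded
  filter_upwards [hinv2 himg, eventually_ne_cobounded (0 : ℂ)] with w ⟨ζ, hζ, hζw⟩ hw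
  have hζ0 : ζ ≠ 0 := by
    rintro rfl
    rw [hF0] at hζw
    exact inv_ne_zero hw hζw.symm
  have : f ζ⁻¹ = w := by rw [hFeq ζ hζ0] at hζw; exact inv_injective hζw
  exact this ▸ hζ hζ0

lemma isOpen_unboundedComponent {Γ : Set ℂ} (hΓ : IsClosed Γ) :
    IsOpen (unboundedComponent Γ) := by
  rw [isOpen_iff_mem_nhds]
  rintro z ⟨hz, hb⟩
  filter_upwards [hΓ.isOpen_compl.connectedComponentIn.mem_nhds (mem_connectedComponentIn hz)]
    with w hw
  exact ⟨connectedComponentIn_subset _ _ hw, by rwa [← connectedComponentIn_eq hw]⟩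

lemma unboundedComponent_mem_cobounded {Γ : Set ℂ} (hΓ : IsBounded Γ) :
    unboundedComponent Γ ∈ cobounded ℂ := by
  obtain ⟨R, hR0, hR⟩ := hΓ.subset_closedBall_lt 0 0
  have hmem : {z : ℂ | R < ‖z‖} ∈ cobounded ℂ := by
    filter_upwards [tendsto_norm_cobounded_atTop.eventually_gt_atTop R] with z hz using hz
  refine mem_of_superset hmem fun z hz => ?_
  have hΓc : ∀ w : ℂ, R < ‖w‖ → w ∈ Γᶜ := fun w hw h =>
    hw.not_ge (mem_closedBall_zero_iff.1 (hR h))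
  refine ⟨hΓc z hz, fun hb => ?_⟩
  have hz0 : 0 < ‖z‖ := hR0.trans hz
  have hray : (fun t : ℝ => (t : ℂ) * z) '' Ici 1 ⊆ connectedComponentIn Γᶜ z := by
    refine (isPreconnected_Ici.image _ (by fun_prop)).subset_connectedComponentIn
      ⟨1, by simp, by simp⟩ ?_
    rintro _ ⟨t, ht, rfl⟩
    refine hΓc _ (lt_of_lt_of_le hz ?_)
    rw [norm_mul, Complex.norm_real, Real.norm_of_nonneg (zero_le_one.trans ht)]
    exact le_mul_of_one_le_left hz0.le ht
  obtain ⟨C, hC⟩ := (hb.subset hray).exists_norm_le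
  obtain ⟨t, ht1, htC⟩ := ((eventually_ge_atTop (1 : ℝ)).and
    (eventually_gt_atTop (C / ‖z‖))).exists
  have := hC _ ⟨t, ht1, rfl⟩
  rw [norm_mul, Complex.norm_real, Real.norm_of_nonneg (zero_le_one.trans ht1)] at this
  rw [div_lt_iff₀ hz0] at htC
  linarith

/-- A conformal map of an exterior domain is proper. -/
lemma IsExtConformal.isClosed_le_norm {Ω : Set ℂ} {Φ : ℂ → ℂ} (hΩ : IsOpen Ω)
    (hΩ' : Ω ∈ cobounded ℂ) (hΦ : IsExtConformal Ω Φ) {a : ℝ} (ha : 1 < a) :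
    IsClosed {z ∈ Ω | a ≤ ‖Φ z‖} := by
  obtain ⟨hd, hbij, c, hc, hlim⟩ := hΦ
  set K : Set ℂ := {z ∈ Ω | a ≤ ‖Φ z‖} with hK
  refine isClosed_of_closure_subset fun x hx => ?_
  have : (𝓝 x ⊓ 𝓟 K).NeBot := mem_closure_iff_clusterPt.1 hx
  have hmemK : ∀ᶠ z in 𝓝 x ⊓ 𝓟 K, z ∈ K := eventually_inf_principal.2 (.of_forall fun _ h => h)
  by_cases hxΩ : x ∈ Ω
  · refine ⟨hxΩ, ?_⟩
    have hcont : Tendsto (fun z => ‖Φ z‖) (𝓝 x ⊓ 𝓟 K) (𝓝 ‖Φ x‖) :=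
      ((hd.differentiableAt (hΩ.mem_nhds hxΩ)).continuousAt.norm.tendsto).mono_left inf_le_left
    exact ge_of_tendsto hcont (hmemK.mono fun z hz => hz.2)
  have hcob := cobounded_le_map_of_tendsto_div (f := Φ) (by exact_mod_cast hc.ne')
    (by
      filter_upwards [hΩ'] with z hz using hd.differentiableAt (hΩ.mem_nhds hz)) hlim
  have hfar : Ω ∩ (closedBall x 1)ᶜ ∈ cobounded ℂ :=
    inter_mem hΩ' (isBounded_def.1 isBounded_closedBall)
  have hbdd : IsBounded (Φ '' (Ω ∩ (closedBall x 1)ᶜ))ᶜ := by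
    rw [isBounded_compl_iff]
    exact hcob (image_mem_map hfar)
  obtain ⟨B, hB⟩ := hbdd.exists_norm_le
  have hcpt : IsCompact {w : ℂ | a ≤ ‖w‖ ∧ ‖w‖ ≤ B} := by
    refine (isCompact_closedBall (0 : ℂ) B).of_isClosed_subset ?_ fun w hw => ?_
    · exact (isClosed_le continuous_const continuous_norm).inter
        (isClosed_le continuous_norm continuous_const)
    · simpa using hw.2
  have hmaps : map Φ (𝓝 x ⊓ 𝓟 K) ≤ 𝓟 {w : ℂ | a ≤ ‖w‖ ∧ ‖w‖ ≤ B} := by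
    rw [le_principal_iff, mem_map]
    filter_upwards [hmemK, mem_inf_of_left (closedBall_mem_nhds x one_pos)] with z hz hz1
    refine ⟨hz.2, hB _ ?_⟩
    rintro ⟨z', ⟨hz'Ω, hz'⟩, e⟩
    exact hz' (hbij.injOn hz'Ω hz.1 e ▸ hz1)
  obtain ⟨w₀, hw₀, hcl⟩ := hcpt hmaps
  obtain ⟨z₀, hz₀, rfl⟩ := hbij.surjOn (show w₀ ∈ extDisk from ha.trans_le hw₀.1)
  have hne : z₀ ≠ x := fun h => hxΩ (h ▸ hz₀)
  obtain ⟨U, V, hU, hV, hzU, hxV, hUV⟩ := t2_separation hne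
  have hUn : Φ '' (U ∩ Ω) ∈ 𝓝 (Φ z₀) := nhds_le_map_nhds_of_injOn hΩ hd hbij.injOn hz₀
    (image_mem_map (inter_mem (hU.mem_nhds hzU) (hΩ.mem_nhds hz₀)))
  have hfr : ∃ᶠ z in 𝓝 x ⊓ 𝓟 K, Φ z ∈ Φ '' (U ∩ Ω) := hcl.frequently hUn
  obtain ⟨z, ⟨u, hu, e⟩, hzK, hzV⟩ := (hfr.and_eventually
    (hmemK.and (mem_inf_of_left (hV.mem_nhds hxV)))).exists
  exact (disjoint_left.1 hUV (hbij.injOn hu.2 hzK.1 e ▸ hu.1) hzV).elim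

lemma exists_dist_lt_of_setDist_eq {A B : Set ℂ} {s s' : ℝ} (hs : 0 < s) (h : setDist A B = s)
    (hs' : s < s') : ∃ x ∈ A, ∃ y ∈ B, dist x y < s' := by
  have hne : (image2 dist A B).Nonempty := by
    by_contra hemp
    rw [setDist, not_nonempty_iff_eq_empty.1 hemp, Real.sInf_empty] at h
    exact hs.ne h
  obtain ⟨_, ⟨x, hx, y, hy, rfl⟩, hlt⟩ := exists_lt_of_csInf_lt hne (h.trans_lt hs')
  exact ⟨x, hx, y, hy, hlt⟩

lemma setDist_le_dist {A B : Set ℂ} {x y : ℂ} (hx : x ∈ A) (hy : y ∈ B) :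
    setDist A B ≤ dist x y :=
  csInf_le ⟨0, by rintro _ ⟨x, -, y, -, rfl⟩; exact dist_nonneg⟩ (mem_image2_of_mem hx hy)

section LevelCurves

variable {Γ : Set ℂ} {Φ : ℂ → ℂ}

/-- Points of the exterior domain closer to `Γ` than the level curve lie inside it. -/
lemma norm_le_of_dist_lt_setDist (hΓ : IsCompact Γ)
    (hΦ : IsExtConformal (unboundedComponent Γ) Φ) {δ : ℝ} (hδ : 0 < δ) {w ζ : ℂ}
    (hw : w ∈ unboundedComponent Γ) (hζ : ζ ∈ Γ)
    (hd : dist w ζ < setDist Γ (levelCurve (unboundedComponent Γ) Φ δ)) : ‖Φ w‖ ≤ 1 + δ := by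
  set Ω := unboundedComponent Γ with hΩdef
  set s := setDist Γ (levelCurve Ω Φ δ) with hs
  by_contra! hlt
  have hΩ : IsOpen Ω := isOpen_unboundedComponent hΓ.isClosed
  have hK : IsClosed {z ∈ Ω | 1 + δ ≤ ‖Φ z‖} :=
    hΦ.isClosed_le_norm hΩ (unboundedComponent_mem_cobounded hΓ.isBounded) (by linarith)
  have hV : IsOpen (Ω ∩ (fun z => ‖Φ z‖) ⁻¹' Ioi (1 + δ)) :=
    hΦ.1.continuousOn.norm.isOpen_inter_preimage hΩ isOpen_Ioi
  obtain ⟨x, -, hxV, hxK⟩ := (convex_ball ζ s).isPreconnected _ _ hV hK.isOpen_compl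
    (fun x hx => by
      by_contra hcon
      simp only [mem_union, not_or, mem_compl_iff, not_not] at hcon
      obtain ⟨h1, hxΩ, h2⟩ := hcon
      have h3 : ‖Φ x‖ = 1 + δ := le_antisymm (not_lt.1 fun h => h1 ⟨hxΩ, h⟩) h2
      have := setDist_le_dist hζ (show x ∈ levelCurve Ω Φ δ from ⟨hxΩ, h3⟩)
      rw [mem_ball, dist_comm] at hx
      exact hx.not_ge this)
    ⟨w, hd, hw, hlt⟩
    ⟨ζ, mem_ball_self (dist_nonneg.trans_lt hd), fun h => h.1.1 hζ⟩
  exact hxK ⟨hxV.1, le_of_lt hxV.2⟩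

lemma levelCurve_le_of_setDist_lt (hΓ : IsCompact Γ)
    (hΦ : IsExtConformal (unboundedComponent Γ) Φ) {δ δ' s s' : ℝ} (hδ' : 0 < δ') (hs : 0 < s)
    (h : setDist Γ (levelCurve (unboundedComponent Γ) Φ δ) = s)
    (h' : setDist Γ (levelCurve (unboundedComponent Γ) Φ δ') = s') (hss' : s < s') :
    δ ≤ δ' := by
  obtain ⟨ζ, hζ, z, hz, hlt⟩ := exists_dist_lt_of_setDist_eq hs h hss'
  have := norm_le_of_dist_lt_setDist hΓ hΦ hδ' hz.1 hζ (by rwa [h', dist_comm])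
  rw [hz.2] at this
  linarith

lemma ball_subset_unboundedComponent {z : ℂ} {R : ℝ} (hz : z ∈ unboundedComponent Γ)
    (h : ∀ ζ ∈ Γ, R ≤ dist ζ z) : ball z R ⊆ unboundedComponent Γ := by
  intro x hx
  have hsub : ball z R ⊆ Γᶜ := fun y hy hyΓ => (mem_ball.1 hy).not_ge (h y hyΓ)
  have hxc : x ∈ connectedComponentIn Γᶜ z :=
    (convex_ball z R).isPreconnected.subset_connectedComponentIn
      (mem_ball_self (dist_nonneg.trans_lt hx)) hsub hx
  exact ⟨hsub hx, by rw [← connectedComponentIn_eq hxc]; exact hz.2⟩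

/-- Doubling the distance to `Γ` changes the level of the Green function by a bounded factor. -/
lemma log_one_add_le_of_setDist_eq_two_mul (hΓ : IsCompact Γ)
    (hΦ : IsExtConformal (unboundedComponent Γ) Φ) {δ₁ δ₂ s : ℝ} (hδ₁ : 0 < δ₁) (hs : 0 < s)
    (h₁ : setDist Γ (levelCurve (unboundedComponent Γ) Φ δ₁) = s)
    (h₂ : setDist Γ (levelCurve (unboundedComponent Γ) Φ δ₂) = 2 * s) :
    Real.log (1 + δ₂) ≤ 11 * Real.log (1 + δ₁) := by
  obtain ⟨ζ, hζ, z, hz, hlt⟩ := exists_dist_lt_of_setDist_eq (by positivity) h₂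
    (by linarith : 2 * s < 5 / 2 * s)
  have hball : ball z (2 * s) ⊆ unboundedComponent Γ :=
    ball_subset_unboundedComponent hz.1 fun ξ hξ => h₂ ▸ setDist_le_dist hξ hz
  set w : ℂ := AffineMap.lineMap ζ z (1 / 3 : ℝ) with hw
  have hwζ : dist w ζ = 1 / 3 * dist ζ z := by
    rw [hw, dist_lineMap_left]; norm_num
  have hwz : dist w z = 2 / 3 * dist ζ z := by
    rw [hw, dist_lineMap_right]; norm_num
  have hwball : w ∈ ball z (2 * s) := by rw [mem_ball, hwz]; linarith
  have hΦw : ‖Φ w‖ ≤ 1 + δ₁ :=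
    norm_le_of_dist_lt_setDist hΓ hΦ hδ₁ (hball hwball) hζ (by rw [h₁, hwζ]; linarith)
  have hone : ∀ x ∈ ball z (2 * s), 1 < ‖Φ x‖ := fun x hx => hΦ.2.1.mapsTo (hball hx)
  have hH := log_norm_harnack (hΦ.1.mono hball) hone hwball
  have hlogw : Real.log ‖Φ w‖ ≤ Real.log (1 + δ₁) :=
    Real.log_le_log (one_pos.trans (hone w hwball)) hΦw
  have hlogz := Real.log_pos (hone z (mem_ball_self (by positivity)))
  have hlogw' := Real.log_pos (hone w hwball)
  rw [hz.2] at hH hlogz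
  set L₁ := Real.log (1 + δ₁)
  set L₂ := Real.log (1 + δ₂)
  have hsL : s * L₂ ≤ s * (11 * L₁) := by
    have ha : 1 / 3 * s * L₂ ≤ (2 * s - dist w z) * L₂ := by gcongr; linarith
    have hb : (2 * s + dist w z) * Real.log ‖Φ w‖ ≤ 11 / 3 * s * L₁ := by gcongr; linarith
    linarith
  exact le_of_mul_le_mul_left hsL hs

end LevelCurves

lemma IsGenPoly.continuous {q : ℂ → ℝ} {r : ℝ} (h : IsGenPoly q r) : Continuous q := by
  obtain ⟨m, zs, β, c, -, hβ, -, hq⟩ := h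
  rw [funext hq]
  exact continuous_const.mul (continuous_finsetProd _ fun j _ =>
    (continuous_id.sub continuous_const).norm.rpow_const fun _ => Or.inr (hβ j).le)

lemma IsGenPoly.nonneg {q : ℂ → ℝ} {r : ℝ} (h : IsGenPoly q r) (z : ℂ) : 0 ≤ q z := by
  obtain ⟨m, zs, β, c, hc, -, -, hq⟩ := h
  rw [hq]
  positivity

lemma IsGenPoly.degree_nonneg {q : ℂ → ℝ} {r : ℝ} (h : IsGenPoly q r) : 0 ≤ r := by
  obtain ⟨m, zs, β, c, -, hβ, rfl, -⟩ := h
  exact Finset.sum_nonneg fun j _ => (hβ j).le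

lemma IsGenPoly.const_mul {q : ℂ → ℝ} {r a : ℝ} (h : IsGenPoly q r) (ha : 0 < a) :
    IsGenPoly (fun z => a * q z) r := by
  obtain ⟨m, zs, β, c, hc, hβ, hr, hq⟩ := h
  exact ⟨m, zs, β, a * c, mul_pos ha hc, hβ, hr, fun z => by simp only [hq, mul_assoc]⟩

/-- If every superlevel set of `q` above any height below `exp (-K) * M` has measure at least
`2 * s`, then removing a set of measure `s` costs at most a factor `1 + exp (p * K)`. -/
lemma integral_rpow_le_of_superlevel {X : Type*} [MeasurableSpace X] {μ : Measure X}
    {Γ A : Set X} {q : X → ℝ} {p K M s : ℝ} (hΓfin : μ Γ ≠ ⊤) (hΓ : MeasurableSet Γ)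
    (hA : MeasurableSet A) (hAΓ : A ⊆ Γ) (hp : 0 < p) (hs : 0 < s) (hq : Measurable q)
    (hq0 : ∀ z, 0 ≤ q z) (hqM : ∀ z ∈ Γ, q z ≤ M) (hM : 0 ≤ M)
    (hμ : μ Γ ≤ μ A + ENNReal.ofReal s)
    (hlevel : ∀ l, 0 < l → l * Real.exp K < M →
      ENNReal.ofReal (2 * s) ≤ μ {z ∈ Γ | l < q z}) :
    ∫ z in Γ, q z ^ p ∂μ ≤ (1 + Real.exp (p * K)) * ∫ z in A, q z ^ p ∂μ := by
  have hAfin : μ A ≠ ⊤ := measure_ne_top_of_subset hAΓ hΓfin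
  have hint : IntegrableOn (fun z => q z ^ p) Γ μ := by
    refine Measure.integrableOn_of_bounded (M := M ^ p) hΓfin
      (hq.pow_const p).aestronglyMeasurable ?_
    filter_upwards [ae_restrict_mem hΓ] with z hz
    rw [Real.norm_of_nonneg (Real.rpow_nonneg (hq0 z) p)]
    exact Real.rpow_le_rpow (hq0 z) (hqM z hz) hp.le
  have hintA := hint.mono_set hAΓ
  have hE : μ (Γ \ A) ≤ ENNReal.ofReal s := by
    rw [measure_sdiff hAΓ hA.nullMeasurableSet hAfin]
    exact tsub_le_iff_left.2 hμ
  set I := ∫ z in A, q z ^ p ∂μ with hI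
  have hI0 : 0 ≤ I := integral_nonneg fun z => Real.rpow_nonneg (hq0 z) p
  have hlow : ∀ l, 0 < l → l < M * Real.exp (-K) → s * l ^ p ≤ I := by
    intro l hl hlM
    have h1 := hlevel l hl (by
      rwa [Real.exp_neg, ← div_eq_mul_inv, lt_div_iff₀ (Real.exp_pos K)] at hlM)
    set S : Set X := {z ∈ Γ | l < q z} with hS
    have hSm : MeasurableSet S := hΓ.inter (measurableSet_lt measurable_const hq)
    have hSA : ENNReal.ofReal s ≤ μ (S ∩ A) := by
      have h2 : μ S ≤ μ (S ∩ A) + μ (Γ \ A) := by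
        refine (measure_mono fun z hz => ?_).trans (measure_union_le _ _)
        by_cases hzA : z ∈ A
        · exact Or.inl ⟨hz, hzA⟩
        · exact Or.inr ⟨hz.1, hzA⟩
      have h3 : ENNReal.ofReal s + ENNReal.ofReal s ≤ μ (S ∩ A) + ENNReal.ofReal s := by
        rw [← ENNReal.ofReal_add hs.le hs.le, ← two_mul]
        exact h1.trans (h2.trans (by gcongr))
      exact (ENNReal.add_le_add_iff_right ENNReal.ofReal_ne_top).1 h3
    have hSAfin : μ (S ∩ A) ≠ ⊤ := measure_ne_top_of_subset inter_subset_right hAfin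
    have hsreal : s ≤ μ.real (S ∩ A) := (ENNReal.ofReal_le_iff_le_toReal hSAfin).1 hSA
    calc s * l ^ p ≤ μ.real (S ∩ A) * l ^ p := by gcongr
      _ = ∫ _ in S ∩ A, l ^ p ∂μ := by rw [setIntegral_const, smul_eq_mul]
      _ ≤ ∫ z in S ∩ A, q z ^ p ∂μ :=
        setIntegral_mono_on (integrableOn_const hSAfin) (hintA.mono_set inter_subset_right)
          (hSm.inter hA) fun z hz => Real.rpow_le_rpow hl.le hz.1.2.le hp.le
      _ ≤ I := setIntegral_mono_set hintA
          (.of_forall fun z => Real.rpow_nonneg (hq0 z) p) inter_subset_right.eventuallyLE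
  have hlow' : s * (M * Real.exp (-K)) ^ p ≤ I := by
    rcases hM.eq_or_lt with rfl | hMpos
    · rwa [zero_mul, Real.zero_rpow hp.ne', mul_zero]
    have hpos : 0 < M * Real.exp (-K) := by positivity
    have hlim : Tendsto (fun l : ℝ => s * l ^ p) (𝓝[<] (M * Real.exp (-K)))
        (𝓝 (s * (M * Real.exp (-K)) ^ p)) :=
      ((Real.continuousAt_rpow_const _ p (Or.inl hpos.ne')).const_mul s).tendsto.mono_left
        nhdsWithin_le_nhds
    refine le_of_tendsto hlim ?_
    filter_upwards [Ioo_mem_nhdsLT hpos] with l hl using hlow l hl.1 hl.2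
  have hup : ∫ z in Γ \ A, q z ^ p ∂μ ≤ s * M ^ p := by
    have hEfin : μ (Γ \ A) ≠ ⊤ := measure_ne_top_of_subset sdiff_subset hΓfin
    calc ∫ z in Γ \ A, q z ^ p ∂μ ≤ ∫ _ in Γ \ A, M ^ p ∂μ :=
        setIntegral_mono_on (hint.mono_set sdiff_subset) (integrableOn_const hEfin)
          (hΓ.diff hA) fun z hz => Real.rpow_le_rpow (hq0 z) (hqM z hz.1) hp.le
      _ = μ.real (Γ \ A) * M ^ p := by rw [setIntegral_const, smul_eq_mul]
      _ ≤ s * M ^ p := by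
        gcongr
        exact ENNReal.toReal_le_of_le_ofReal hs.le hE
  have hexp : s * M ^ p = Real.exp (p * K) * (s * (M * Real.exp (-K)) ^ p) := by
    rw [Real.mul_rpow hM (Real.exp_pos _).le, ← Real.exp_mul]
    have : Real.exp (p * K) * Real.exp (-K * p) = 1 := by
      rw [← Real.exp_add, ← Real.exp_zero]; congr 1; ring
    linear_combination (-(s * M ^ p)) * this
  have hsplit := integral_inter_add_sdiff hA hint
  rw [inter_eq_self_of_subset_right hAΓ] at hsplit
  rw [← hsplit, ← hI, add_mul, one_mul]
  gcongr
  rw [hexp] at hup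
  exact hup.trans (by gcongr)

/-- (4.3): assume `c₁ > 0` is such that every generalized polynomial `q_r`
of degree `r` with `|{z ∈ Γ : q_r(z) > 1}| ≤ s < (diam Γ)/2` satisfies
`‖q_r‖_{C(Γ)} ≤ exp(c₁ δ(s) r)`. Then there is `c₂ = c₂(Γ,c₁) > 0` such that for every
`1 ≤ p < ∞`, every generalized polynomial `q_r` of degree `r`, every `0 < s < (diam Γ)/4`
and every Borel `A ⊆ Γ` with `|A| ≥ |Γ| - s`,
`∫_Γ q_r^p ds ≤ (1 + exp(c₂ δ(s) p r)) ∫_A q_r^p ds`. -/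
theorem genpoly_remez_Lp
    (Γ : Set ℂ) (Λ : ℝ) (hΓJ : IsJordanCurve Γ) (hΓq : IsQuasismooth Γ Λ)
    (Φ : ℂ → ℂ) (hΦ : IsExtConformal (unboundedComponent Γ) Φ)
    (δfun : ℝ → ℝ)
    (hδfun : ∀ s : ℝ, 0 < s → s < Metric.diam Γ →
      0 < δfun s ∧ setDist Γ (levelCurve (unboundedComponent Γ) Φ (δfun s)) = s)
    (c₁ : ℝ) (hc₁ : 0 < c₁)
    (hremez : ∀ (q : ℂ → ℝ) (r s : ℝ), IsGenPoly q r → 0 < s →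
      μH[1] {z ∈ Γ | 1 < q z} ≤ ENNReal.ofReal s → s < Metric.diam Γ / 2 →
      ∀ z ∈ Γ, q z ≤ Real.exp (c₁ * δfun s * r)) :
    ∃ c₂ > (0:ℝ), ∀ (p : ℝ) (q : ℂ → ℝ) (r s : ℝ) (A : Set ℂ),
      1 ≤ p → IsGenPoly q r →
      0 < s → s < Metric.diam Γ / 4 →
      MeasurableSet A → A ⊆ Γ → μH[1] Γ ≤ μH[1] A + ENNReal.ofReal s →
      ∫ z in Γ, q z ^ p ∂μH[1] ≤
        (1 + Real.exp (c₂ * δfun s * p * r)) * ∫ z in A, q z ^ p ∂μH[1] := by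
  obtain ⟨γ, hγc, -, hΓγ⟩ := id hΓJ
  have hΓc : IsCompact Γ := hΓγ ▸ (isCompact_sphere (0 : ℂ) 1).image_of_continuousOn hγc
  have hΓne : Γ.Nonempty := hΓγ ▸ (NormedSpace.sphere_nonempty.2 zero_le_one).image γ
  have hΓfin : μH[1] Γ ≠ ⊤ := (hΓq.hausdorffMeasure_lt_top hΓJ).ne
  set D := δfun (Metric.diam Γ / 2) with hD
  refine ⟨c₁ * (11 * (1 + |D|)), by positivity, ?_⟩
  intro p q r s A hp hq hs hsd hA hAΓ hμ
  obtain ⟨hδ₁, h₁⟩ := hδfun s hs (by linarith)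
  obtain ⟨hδ₂, h₂⟩ := hδfun (2 * s) (by linarith) (by linarith)
  obtain ⟨hD0, hD'⟩ := hδfun (Metric.diam Γ / 2) (by linarith) (by linarith)
  have hδD : δfun (2 * s) ≤ D :=
    levelCurve_le_of_setDist_lt hΓc hΦ hD0 (by positivity) h₂ hD' (by linarith)
  have hdouble : δfun (2 * s) ≤ 11 * (1 + |D|) * δfun s := by
    rw [abs_of_pos hD0]
    have hlog := log_one_add_le_of_setDist_eq_two_mul hΓc hΦ hδ₁ hs h₁ h₂
    have hupper : Real.log (1 + δfun s) ≤ δfun s := by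
      linarith [Real.log_le_sub_one_of_pos (by linarith : 0 < 1 + δfun s)]
    have hlower := Real.one_sub_inv_le_log_of_pos (by linarith : 0 < 1 + δfun (2 * s))
    have heq : 1 - (1 + δfun (2 * s))⁻¹ = δfun (2 * s) / (1 + δfun (2 * s)) := by
      have : 1 + δfun (2 * s) ≠ 0 := by positivity
      field_simp
      ring
    rw [heq, div_le_iff₀ (by positivity)] at hlower
    calc δfun (2 * s) ≤ Real.log (1 + δfun (2 * s)) * (1 + δfun (2 * s)) := hlower
      _ ≤ (11 * δfun s) * (1 + D) := by gcongr; linarith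
      _ = 11 * (1 + D) * δfun s := by ring
  obtain ⟨z₀, hz₀, hmax⟩ := hΓc.exists_isMaxOn hΓne hq.continuous.continuousOn
  have hr := hq.degree_nonneg
  have hmain := integral_rpow_le_of_superlevel (K := c₁ * δfun (2 * s) * r) hΓfin
    hΓc.measurableSet hA hAΓ (by linarith : 0 < p) hs hq.continuous.measurable hq.nonneg
    (fun z hz => hmax hz) (hq.nonneg z₀) hμ (fun l hl hlM => by
      by_contra! hlt
      have hset : {z ∈ Γ | 1 < l⁻¹ * q z} = {z ∈ Γ | l < q z} := by
        ext z
        simp only [mem_ofPred_eq, inv_mul_eq_div, one_lt_div hl]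
      have := hremez _ r (2 * s) (hq.const_mul (inv_pos.2 hl)) (by linarith)
        (hset ▸ hlt.le) (by linarith) z₀ hz₀
      rw [inv_mul_le_iff₀ hl] at this
      linarith)
  refine hmain.trans (mul_le_mul_of_nonneg_right ?_
    (integral_nonneg fun z => Real.rpow_nonneg (hq.nonneg z) p))
  refine add_le_add_right (Real.exp_le_exp.2 ?_) 1
  calc p * (c₁ * δfun (2 * s) * r) ≤ p * (c₁ * (11 * (1 + |D|) * δfun s) * r) := by gcongr
    _ = c₁ * (11 * (1 + |D|)) * δfun s * p * r := by ring
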